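/- Let σ and σ′ be consecutive patterns on {1,2,…,k−1}. Then σ is des-Wilf-equivalent to σ′ if and only if the quasi-consecutive pattern σk is des-Wilf-equivalent to σ′k. -/

import Mathlib

open scoped Classical
open scoped Classical

/-- The number of descents of a permutation of `Fin n` (one-line notation `π 0, π 1, …`). -/
def des {n : ℕ} (π : Equiv.Perm (Fin n)) : ℕ :=
  (Finset.univ.filter fun i : Fin n =>
    ∃ h : (i : ℕ) + 1 < n, π ⟨(i : ℕ) + 1, h⟩ < π i).card

/-- `π` contains an occurrence of the consecutive pattern `σ`. -/
def ConsecOccurs {m n : ℕ} (σ : Equiv.Perm (Fin m)) (π : Equiv.Perm (Fin n)) : Prop :=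
  ∃ (i : ℕ) (h : i + m ≤ n),
    ∀ a b : Fin m,
      (π ⟨i + (a : ℕ), by have := a.isLt; omega⟩ <
        π ⟨i + (b : ℕ), by have := b.isLt; omega⟩ ↔ σ a < σ b)

/-- `π` avoids the consecutive pattern `σ`. -/
def ConsecAvoids {m n : ℕ} (σ : Equiv.Perm (Fin m)) (π : Equiv.Perm (Fin n)) : Prop :=
  ¬ ConsecOccurs σ π

/-- `π` contains an occurrence of the quasi-consecutive pattern `p = σk`. -/
def QuasiOccurs {m n : ℕ} (σ : Equiv.Perm (Fin m)) (π : Equiv.Perm (Fin n)) : Prop :=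
  ∃ (i j : ℕ) (hij : i + m ≤ j) (hj : j < n),
    (∀ a b : Fin m,
      (π ⟨i + (a : ℕ), by have := a.isLt; omega⟩ <
        π ⟨i + (b : ℕ), by have := b.isLt; omega⟩ ↔ σ a < σ b)) ∧
    ∀ a : Fin m, π ⟨i + (a : ℕ), by have := a.isLt; omega⟩ < π ⟨j, hj⟩

/-- `π` avoids the quasi-consecutive pattern `p = σk`. -/
def QuasiAvoids {m n : ℕ} (σ : Equiv.Perm (Fin m)) (π : Equiv.Perm (Fin n)) : Prop :=
  ¬ QuasiOccurs σ π

/-!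
Cut a permutation at its largest letter, `π = u M v`. Every factor of `u` is followed by the
larger letter `M`, and no occurrence of `σk` uses `M` as one of its first `k - 1` letters, so `π`
avoids `σk` if and only if `u` avoids `σ` and `v` avoids `σk`. Moreover
`des π = des u + des v`, plus `1` when `v` is nonempty. Hence the descent polynomials `Cₙ` of the
permutations avoiding `σ` and `Qₙ` of those avoiding `σk` satisfy
`Qₙ₊₁ = Cₙ + ∑ j < n, (n choose j) X Cⱼ Qₙ₋ⱼ` with `Q₀ = 1`, and through this recurrence each of
the two sequences determines the other.
-/

open Polynomial

section Occurrences

variable {α β : Type*} [LinearOrder α] [LinearOrder β] {m n : ℕ} {σ : Equiv.Perm (Fin m)}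

/-- The word `w` has standardization `σ`; for a word without repeated letters this is the notion
of the literature. -/
def HasStd (σ : Equiv.Perm (Fin m)) (w : List α) : Prop :=
  ∃ h : w.length = m, ∀ a b : Fin m, w[a] < w[b] ↔ σ a < σ b

/-- The consecutive pattern `σ` occurs in the word `l`, as a factor `w`. -/
def ConsecOccursIn (σ : Equiv.Perm (Fin m)) (l : List α) : Prop :=
  ∃ w, w <:+: l ∧ HasStd σ w

/-- The quasi-consecutive pattern `σk` occurs in the word `l`: the underlined block is the factor
`w`, and its final letter is found in the part `v` of `l` to the right of `w`. -/
def QuasiOccursIn (σ : Equiv.Perm (Fin m)) (l : List α) : Prop :=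
  ∃ w v, w ++ v <:+ l ∧ HasStd σ w ∧ ∃ x ∈ v, ∀ y ∈ w, y < x

theorem hasStd_map (e : α ↪o β) {w : List α} : HasStd σ (w.map e) ↔ HasStd σ w := by
  simp [HasStd]

theorem HasStd.ne_nil (hm : 0 < m) {w : List α} (h : HasStd σ w) : w ≠ [] := by
  rintro rfl
  exact hm.ne h.1

theorem consecOccursIn_map (e : α ↪o β) {l : List α} :
    ConsecOccursIn σ (l.map e) ↔ ConsecOccursIn σ l := by
  constructor
  · rintro ⟨_, hw, hσ⟩
    obtain ⟨w, hwl, rfl⟩ := List.infix_map_iff.1 hw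
    exact ⟨w, hwl, (hasStd_map e).1 hσ⟩
  · rintro ⟨w, hw, hσ⟩
    exact ⟨w.map e, hw.map e, (hasStd_map e).2 hσ⟩

theorem quasiOccursIn_map (e : α ↪o β) {l : List α} :
    QuasiOccursIn σ (l.map e) ↔ QuasiOccursIn σ l := by
  constructor
  · rintro ⟨_, _, hwv, hσ, hx⟩
    obtain ⟨_, hwvl, h⟩ := List.suffix_map_iff.1 hwv
    obtain ⟨w, v, rfl, rfl, rfl⟩ := List.map_eq_append_iff.1 h.symm
    exact ⟨w, v, hwvl, (hasStd_map e).1 hσ, by simpa using hx⟩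
  · rintro ⟨w, v, hwv, hσ, hx⟩
    exact ⟨w.map e, v.map e, by simpa using hwv.map e, (hasStd_map e).2 hσ, by simpa using hx⟩

theorem not_consecOccursIn_nil (hm : 0 < m) : ¬ ConsecOccursIn σ ([] : List α) := by
  rintro ⟨w, hw, hσ⟩
  exact hσ.ne_nil hm (List.infix_nil.1 hw)

theorem not_quasiOccursIn_nil : ¬ QuasiOccursIn σ ([] : List α) := by
  rintro ⟨w, v, hwv, -, x, hx, -⟩
  simp_all

theorem prefix_of_append_eq_append_cons {γ : Type*} {w z u v : List γ} {M : γ} (hM : M ∉ w)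
    (h : w ++ z = u ++ M :: v) : w <+: u := by
  rcases List.append_eq_append_iff.1 h with ⟨r, rfl, -⟩ | ⟨r, rfl, hr⟩
  · exact List.prefix_append w r
  · cases r <;> simp_all

theorem quasiOccursIn_append_cons (hm : 0 < m) {u v : List α} {M : α}
    (hu : ∀ a ∈ u, a < M) (hv : ∀ b ∈ v, b < M) :
    QuasiOccursIn σ (u ++ M :: v) ↔ ConsecOccursIn σ u ∨ QuasiOccursIn σ v := by
  constructor
  · rintro ⟨w, z, hwz, hσ, x, hx, hwx⟩
    have hxM : x ≤ M := by
      have : x ∈ u ++ M :: v := hwz.subset (List.mem_append_right w hx)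
      grind
    have hMw : M ∉ w := fun h => (hwx M h).not_ge hxM
    rcases List.suffix_or_suffix_of_suffix hwz (List.suffix_append u (M :: v)) with h | ⟨t, ht⟩
    · rcases List.suffix_cons_iff.1 h with h | h
      · obtain ⟨y, w, rfl⟩ := List.exists_cons_of_ne_nil (hσ.ne_nil hm)
        simp_all
      · exact Or.inr ⟨w, z, h, hσ, x, hx, hwx⟩
    · have hwt : w <+: t := prefix_of_append_eq_append_cons hMw ht.symm
      have htu : t <:+ u := by
        obtain ⟨s, hs⟩ := hwz
        rw [← ht, ← List.append_assoc, List.append_left_inj] at hs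
        exact ⟨s, hs⟩
      exact Or.inl ⟨w, List.infix_iff_prefix_suffix.2 ⟨t, hwt, htu⟩, hσ⟩
  · rintro (⟨w, ⟨s, t, rfl⟩, hσ⟩ | ⟨w, z, hwz, hσ, hx⟩)
    · exact ⟨w, t ++ M :: v, ⟨s, by simp⟩, hσ, M, by simp, fun y hy => hu y (by simp [hy])⟩
    · exact ⟨w, z, List.suffix_append_of_suffix (hwz.trans (List.suffix_cons M v)), hσ, hx⟩

theorem consecOccursIn_ofFn {π : Equiv.Perm (Fin n)} :
    ConsecOccursIn σ (List.ofFn π) ↔ ConsecOccurs σ π := by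
  simp only [ConsecOccursIn, List.infix_iff_getElem?, ConsecOccurs]
  constructor
  · rintro ⟨w, ⟨i, hi, hw⟩, ⟨rfl, hσ⟩⟩
    rw [List.length_ofFn] at hi
    have hπ (a : Fin w.length) : π ⟨i + a, by omega⟩ = w[a] := by
      obtain ⟨_, h⟩ : ∃ h : i + a < n, π ⟨i + a, h⟩ = w[a] := by
        simpa [add_comm, List.getElem?_eq_some_iff] using hw a a.2
      exact h
    exact ⟨i, by omega, fun a b => by rw [hπ, hπ, hσ]⟩
  · rintro ⟨i, hi, hσ⟩
    refine ⟨List.ofFn fun a : Fin m => π ⟨i + a, by omega⟩, ⟨i, ?_, fun a ha => ?_⟩,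
      by simp, by simpa using hσ⟩
    · simpa [add_comm] using hi
    · rw [List.length_ofFn] at ha
      simp [add_comm, show i + a < n by omega]

theorem quasiOccursIn_ofFn {π : Equiv.Perm (Fin n)} :
    QuasiOccursIn σ (List.ofFn π) ↔ QuasiOccurs σ π := by
  constructor
  · rintro ⟨w, v, ⟨s, hs⟩, ⟨rfl, hσ⟩, x, hx, hwx⟩
    have hn : s.length + (w.length + v.length) = n := by simpa using congrArg List.length hs
    have hπ (k : ℕ) (hk : k < n) : π ⟨k, hk⟩ = (s ++ (w ++ v))[k]'(by simpa [hn]) := by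
      simp [hs]
    have hw (a : Fin w.length) : π ⟨s.length + a, by omega⟩ = w[a] := by simp [hπ]
    obtain ⟨j, hj, rfl⟩ := List.mem_iff_getElem.1 hx
    have hv : π ⟨s.length + (w.length + j), by omega⟩ = v[j] := by simp [hπ]
    refine ⟨s.length, s.length + (w.length + j), by omega, by omega, fun a b => ?_, fun a => ?_⟩
    · rw [hw, hw, hσ]
    · rw [hw, hv]
      exact hwx _ (List.getElem_mem a.2)
  · rintro ⟨i, j, hij, hj, hσ, hlt⟩
    refine ⟨List.ofFn fun a : Fin m => π ⟨i + a, by omega⟩, (List.ofFn π).drop (i + m), ?_,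
      ⟨by simp, by simpa using hσ⟩, π ⟨j, hj⟩, ?_, by simpa [List.forall_mem_ofFn_iff] using hlt⟩
    · convert List.drop_suffix i (List.ofFn π) using 1
      apply List.ext_getElem
      · simp only [List.length_append, List.length_ofFn, List.length_drop]
        omega
      · intro k hk hk'
        simp only [List.getElem_append, List.getElem_drop, List.getElem_ofFn, List.length_ofFn]
        grind
    · rw [List.mem_drop_iff_getElem]
      refine ⟨j - (i + m), ?_, ?_⟩
      · simpa only [List.length_ofFn, Nat.sub_add_cancel hij] using hj
      · simp only [List.getElem_ofFn, Nat.add_sub_cancel' hij]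

end Occurrences

section Descents

variable {α β : Type*} [LinearOrder α] [LinearOrder β]

/-- The descent number of a word. -/
def wordDes : List α → ℕ
  | [] => 0
  | [_] => 0
  | a :: b :: l => (if b < a then 1 else 0) + wordDes (b :: l)

theorem wordDes_map (e : α ↪o β) (l : List α) : wordDes (l.map e) = wordDes l := by
  induction l using wordDes.induct with
  | case1 => rfl
  | case2 => rfl
  | case3 a b l ih => simp_all [wordDes]

theorem wordDes_append_cons {u : List α} {M : α} (hu : ∀ a ∈ u, a ≤ M) (v : List α) :
    wordDes (u ++ M :: v) = wordDes u + wordDes (M :: v) := by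
  induction u using wordDes.induct with
  | case1 => simp [wordDes]
  | case2 a => simp_all [wordDes]
  | case3 a b l ih => simp_all [wordDes, add_assoc]

theorem wordDes_cons {v : List α} {M : α} (hv : ∀ b ∈ v, b < M) :
    wordDes (M :: v) = if v = [] then 0 else 1 + wordDes v := by
  cases v <;> simp_all [wordDes]

theorem wordDes_ofFn {n : ℕ} (f : Fin (n + 1) → α) :
    wordDes (List.ofFn f) = Finset.card {i : Fin n | f i.succ < f i.castSucc} := by
  induction n with
  | zero => simp [wordDes]
  | succ n ih =>
    rw [Fin.card_filter_univ_succ, List.ofFn_succ, List.ofFn_succ, wordDes,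
      ← List.ofFn_succ (f := fun i => f i.succ), ih, Fin.castSucc_zero]
    split_ifs <;> simp [add_comm]

theorem wordDes_ofFn_perm {n : ℕ} (π : Equiv.Perm (Fin n)) : wordDes (List.ofFn π) = des π := by
  cases n with
  | zero => simp [wordDes, des]
  | succ n =>
    rw [wordDes_ofFn, des, Fin.univ_castSuccEmb, Finset.filter_cons_of_neg _ _ _ _ (by simp),
      Finset.filter_map, Finset.card_map]
    congr! with i
    exact ⟨fun h => ⟨by simp, h⟩, fun ⟨_, h⟩ => h⟩

end Descents

section Arrangements

variable {α β : Type*} [DecidableEq α] [DecidableEq β]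

/-- The words that use each letter of `S` exactly once. -/
noncomputable def arrangements (S : Finset α) : Finset (List α) :=
  S.val.lists.toFinset

theorem mem_arrangements {S : Finset α} {l : List α} :
    l ∈ arrangements S ↔ l.Nodup ∧ ∀ a, a ∈ l ↔ a ∈ S := by
  rw [arrangements, Multiset.mem_toFinset, Multiset.mem_lists_iff]
  constructor
  · intro h
    have hl := S.nodup
    rw [h] at hl
    exact ⟨hl, fun a => by rw [← Finset.mem_val, h]; simp⟩
  · rintro ⟨hl, h⟩
    exact (S.nodup.ext (t := (l : Multiset α)) hl).2 (by simp [h])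

theorem arrangements_empty : arrangements (∅ : Finset α) = {[]} := by
  ext l
  simp only [mem_arrangements, Finset.notMem_empty, iff_false, ← List.eq_nil_iff_forall_not_mem,
    Finset.mem_singleton, and_iff_right_iff_imp]
  rintro rfl
  exact List.nodup_nil

theorem arrangements_map (e : α ↪ β) (S : Finset α) :
    arrangements (S.map e) = (arrangements S).image (List.map e) := by
  ext l
  simp only [Finset.mem_image, mem_arrangements, Finset.mem_map]
  constructor
  · rintro ⟨hl, h⟩
    obtain ⟨l, rfl⟩ : l ∈ Set.range (List.map e) := by
      rw [Set.range_list_map]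
      intro x hx
      obtain ⟨y, -, rfl⟩ := (h x).1 hx
      exact ⟨y, rfl⟩
    exact ⟨l, ⟨hl.of_map, fun a => by simpa using h (e a)⟩, rfl⟩
  · rintro ⟨l, ⟨hl, h⟩, rfl⟩
    exact ⟨hl.map e.injective, by simp [h]⟩

theorem arrangements_univ (n : ℕ) :
    arrangements (Finset.univ : Finset (Fin n)) =
      Finset.univ.image fun π : Equiv.Perm (Fin n) => List.ofFn π := by
  ext l
  simp only [Finset.mem_image, mem_arrangements, Finset.mem_univ, iff_true, true_and]
  constructor
  · rintro ⟨hl, h⟩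
    let e := hl.getEquivOfForallMemList l h
    have hn : n = l.length := by simpa using (Fintype.card_congr e).symm
    exact ⟨(finCongr hn).trans e, List.ext_getElem (by simp [hn]) (by simp [e])⟩
  · rintro ⟨π, rfl⟩
    exact ⟨List.nodup_ofFn.2 π.injective, fun a => List.mem_ofFn.2 (π.surjective a)⟩

theorem sum_arrangements_insert {R : Type*} [AddCommMonoid R] {S : Finset α} {M : α} (hM : M ∉ S)
    (f : List α → R) :
    ∑ l ∈ arrangements (insert M S), f l =
      ∑ T ∈ S.powerset, ∑ u ∈ arrangements T, ∑ v ∈ arrangements (S \ T), f (u ++ M :: v) := by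
  simp_rw [← Finset.sum_product', Finset.sum_sigma']
  symm
  refine Finset.sum_nbij (fun x => x.2.1 ++ M :: x.2.2) ?_ ?_ ?_ (fun _ _ => rfl)
  · rintro ⟨T, u, v⟩ h
    simp only [Finset.mem_sigma, Finset.mem_powerset, Finset.mem_product, mem_arrangements,
      Finset.mem_sdiff] at h ⊢
    grind
  · rintro ⟨T, u, v⟩ h ⟨T', u', v'⟩ h' heq
    simp only [Finset.mem_coe, Finset.mem_sigma, Finset.mem_powerset, Finset.mem_product,
      mem_arrangements, Finset.mem_sdiff] at h h' heq
    obtain ⟨rfl, -, rfl⟩ := (List.append_cons_inj_of_notMem (by grind) (by grind)).1 heq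
    obtain rfl : T = T' := by ext; grind
    rfl
  · intro l hl
    simp only [Finset.mem_coe, mem_arrangements, Finset.mem_insert] at hl
    obtain ⟨u, v, rfl⟩ := List.append_of_mem ((hl.2 M).2 (Or.inl rfl))
    simp only [List.mem_append, List.mem_cons] at hl
    refine ⟨⟨u.toFinset, u, v⟩, ?_, rfl⟩
    simp only [Finset.mem_coe, Finset.mem_sigma, Finset.mem_powerset, Finset.mem_product,
      mem_arrangements, Finset.mem_sdiff, List.mem_toFinset, Finset.subset_iff]
    grind

end Arrangements

section DescentPolynomials

variable {α β : Type*} [LinearOrder α] [LinearOrder β]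

/-- The generating polynomial, by descent number, of the arrangements of `S` that satisfy `p`. -/
noncomputable def descentPoly (p : List α → Prop) (S : Finset α) : ℤ[X] :=
  ∑ l ∈ arrangements S with p l, X ^ wordDes l

theorem descentPoly_empty {p : List α → Prop} (h : p []) : descentPoly p ∅ = 1 := by
  simp [descentPoly, arrangements_empty, Finset.filter_singleton, h, wordDes]

theorem descentPoly_map (e : α ↪o β) {p : List α → Prop} {q : List β → Prop}
    (h : ∀ l, q (l.map e) ↔ p l) (S : Finset α) :
    descentPoly q (S.map e.toEmbedding) = descentPoly p S := by
  have hinj : Function.Injective (List.map e.toEmbedding) := List.map_injective_iff.2 e.injective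
  rw [descentPoly, arrangements_map, Finset.filter_image, Finset.sum_image hinj.injOn]
  simp [descentPoly, h, wordDes_map]

theorem descentPoly_eq_descentPoly_univ (S : Finset α) {p : List α → Prop}
    {q : List (Fin S.card) → Prop} (h : ∀ l, p (l.map (S.orderEmbOfFin rfl)) ↔ q l) :
    descentPoly p S = descentPoly q Finset.univ := by
  rw [← descentPoly_map _ h, Finset.map_orderEmbOfFin_univ]

theorem descentPoly_insert {p q : List α → Prop} {S : Finset α} {M : α} (hM : ∀ x ∈ S, x < M)
    (hpq : ∀ u v, (∀ a ∈ u, a < M) → (∀ b ∈ v, b < M) → (q (u ++ M :: v) ↔ p u ∧ q v)) :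
    descentPoly q (insert M S) = ∑ T ∈ S.powerset, descentPoly p T *
      ((if (S \ T).card = 0 then 1 else X) * descentPoly q (S \ T)) := by
  simp only [descentPoly, Finset.sum_filter]
  rw [sum_arrangements_insert fun h => (hM M h).false]
  refine Finset.sum_congr rfl fun T hT => ?_
  rw [Finset.mul_sum, Finset.sum_mul_sum]
  refine Finset.sum_congr rfl fun u hu => Finset.sum_congr rfl fun v hv => ?_
  rw [mem_arrangements] at hu hv
  have huM : ∀ a ∈ u, a < M := fun a ha => hM a (Finset.mem_powerset.1 hT ((hu.2 a).1 ha))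
  have hvM : ∀ b ∈ v, b < M := fun b hb => hM b (Finset.sdiff_subset ((hv.2 b).1 hb))
  have hv₀ : (S \ T).card = 0 ↔ v = [] := by
    simp only [Finset.card_eq_zero, Finset.eq_empty_iff_forall_notMem,
      List.eq_nil_iff_forall_not_mem, hv.2]
  have hdes : (X : ℤ[X]) ^ wordDes (u ++ M :: v) =
      X ^ wordDes u * ((if v = [] then 1 else X) * X ^ wordDes v) := by
    rw [wordDes_append_cons (fun a ha => (huM a ha).le), wordDes_cons hvM, pow_add]
    by_cases h : v = [] <;> simp [h, wordDes, pow_add]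
  simp only [hpq u v huM hvM, hv₀, hdes]
  by_cases hp : p u <;> by_cases hq : q v <;> simp [hp, hq]

theorem coeff_descentPoly_univ {n : ℕ} (p : List (Fin n) → Prop) (k : ℕ) :
    (descentPoly p Finset.univ).coeff k =
      Nat.card {π : Equiv.Perm (Fin n) // p (List.ofFn π) ∧ des π = k} := by
  have hinj : Function.Injective fun π : Equiv.Perm (Fin n) => List.ofFn π :=
    List.ofFn_injective.comp DFunLike.coe_injective
  rw [descentPoly, arrangements_univ, Finset.filter_image, Finset.sum_image hinj.injOn]
  simp [wordDes_ofFn_perm, coeff_X_pow, Finset.filter_filter, Fintype.card_subtype, eq_comm]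

end DescentPolynomials

theorem eq_iff_eq_of_binomial_recurrence {R : Type*} [Semiring R] [IsLeftCancelAdd R]
    {t c c' q q' : ℕ → R} (ht : t 0 = 1) (hq₀ : q 0 = 1) (hq₀' : q' 0 = 1)
    (hq : ∀ n, q (n + 1) =
      ∑ j ∈ Finset.range (n + 1), n.choose j • (c j * (t (n - j) * q (n - j))))
    (hq' : ∀ n, q' (n + 1) =
      ∑ j ∈ Finset.range (n + 1), n.choose j • (c' j * (t (n - j) * q' (n - j)))) :
    c = c' ↔ q = q' := by
  constructor
  · rintro rfl
    funext n
    induction n using Nat.strong_induction_on with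
    | _ n ih =>
      cases n with
      | zero => rw [hq₀, hq₀']
      | succ n =>
        rw [hq, hq']
        exact Finset.sum_congr rfl fun j _ => by rw [ih (n - j) (by omega)]
  · rintro rfl
    funext n
    induction n using Nat.strong_induction_on with
    | _ n ih =>
      have h := (hq n).symm.trans (hq' n)
      rw [Finset.sum_range_succ, Finset.sum_range_succ,
        Finset.sum_congr rfl fun j hj => by rw [ih j (Finset.mem_range.1 hj)]] at h
      simpa [ht, hq₀] using add_left_cancel h

section PatternSets

variable {α β : Type*} [LinearOrder α] [LinearOrder β]

/-- The word `l` avoids each consecutive pattern of the set `P`; an element of `P` is a pattern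
together with its length. -/
def AvoidsConsec (P : Set (Σ m, Equiv.Perm (Fin m))) (l : List α) : Prop :=
  ∀ σ ∈ P, ¬ ConsecOccursIn σ.2 l

/-- The word `l` avoids the quasi-consecutive pattern `σk` for each `σ` in the set `P`. -/
def AvoidsQuasi (P : Set (Σ m, Equiv.Perm (Fin m))) (l : List α) : Prop :=
  ∀ σ ∈ P, ¬ QuasiOccursIn σ.2 l

/-- The descent polynomial of the permutations of length `n` avoiding the consecutive patterns
in `P`. -/
noncomputable def consecPoly (P : Set (Σ m, Equiv.Perm (Fin m))) (n : ℕ) : ℤ[X] :=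
  descentPoly (AvoidsConsec P) (Finset.univ : Finset (Fin n))

/-- The descent polynomial of the permutations of length `n` avoiding the quasi-consecutive
patterns `σk` with `σ` in `P`. -/
noncomputable def quasiPoly (P : Set (Σ m, Equiv.Perm (Fin m))) (n : ℕ) : ℤ[X] :=
  descentPoly (AvoidsQuasi P) (Finset.univ : Finset (Fin n))

variable {P P' : Set (Σ m, Equiv.Perm (Fin m))}

theorem avoidsConsec_map (e : α ↪o β) (l : List α) :
    AvoidsConsec P (l.map e) ↔ AvoidsConsec P l := by
  simp only [AvoidsConsec, consecOccursIn_map]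

theorem avoidsQuasi_map (e : α ↪o β) (l : List α) :
    AvoidsQuasi P (l.map e) ↔ AvoidsQuasi P l := by
  simp only [AvoidsQuasi, quasiOccursIn_map]

theorem avoidsQuasi_append_cons (hP : ∀ σ ∈ P, 0 < σ.1) {u v : List α} {M : α}
    (hu : ∀ a ∈ u, a < M) (hv : ∀ b ∈ v, b < M) :
    AvoidsQuasi P (u ++ M :: v) ↔ AvoidsConsec P u ∧ AvoidsQuasi P v := by
  simp only [AvoidsQuasi, AvoidsConsec, ← forall₂_and, ← not_or]
  exact forall₂_congr fun σ hσ => not_congr (quasiOccursIn_append_cons (hP σ hσ) hu hv)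

theorem consecPoly_zero (hP : ∀ σ ∈ P, 0 < σ.1) : consecPoly P 0 = 1 :=
  descentPoly_empty fun σ hσ => not_consecOccursIn_nil (hP σ hσ)

theorem quasiPoly_zero : quasiPoly P 0 = 1 :=
  descentPoly_empty fun _ _ => not_quasiOccursIn_nil

theorem descentPoly_avoidsConsec (S : Finset α) :
    descentPoly (AvoidsConsec P) S = consecPoly P S.card :=
  descentPoly_eq_descentPoly_univ S (avoidsConsec_map _)

theorem descentPoly_avoidsQuasi (S : Finset α) :
    descentPoly (AvoidsQuasi P) S = quasiPoly P S.card :=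
  descentPoly_eq_descentPoly_univ S (avoidsQuasi_map _)

theorem quasiPoly_succ (hP : ∀ σ ∈ P, 0 < σ.1) (n : ℕ) :
    quasiPoly P (n + 1) = ∑ j ∈ Finset.range (n + 1), n.choose j •
      (consecPoly P j * ((if n - j = 0 then 1 else X) * quasiPoly P (n - j))) := by
  calc quasiPoly P (n + 1)
      = descentPoly (AvoidsQuasi P) (insert n (Finset.range n)) := by
        simp [descentPoly_avoidsQuasi]
    _ = ∑ T ∈ (Finset.range n).powerset, consecPoly P T.card *
          ((if n - T.card = 0 then 1 else X) * quasiPoly P (n - T.card)) := by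
        rw [descentPoly_insert (fun x => Finset.mem_range.1)
          fun u v => avoidsQuasi_append_cons hP]
        refine Finset.sum_congr rfl fun T hT => ?_
        rw [descentPoly_avoidsConsec, descentPoly_avoidsQuasi,
          Finset.card_sdiff_of_subset (Finset.mem_powerset.1 hT), Finset.card_range]
    _ = _ := by
        rw [Finset.sum_powerset_apply_card fun j =>
          consecPoly P j * ((if n - j = 0 then 1 else X) * quasiPoly P (n - j)),
          Finset.card_range]

theorem consecPoly_eq_iff_quasiPoly_eq (hP : ∀ σ ∈ P, 0 < σ.1) (hP' : ∀ σ ∈ P', 0 < σ.1) :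
    consecPoly P = consecPoly P' ↔ quasiPoly P = quasiPoly P' :=
  eq_iff_eq_of_binomial_recurrence (t := fun j => if j = 0 then 1 else X) (if_pos rfl)
    quasiPoly_zero quasiPoly_zero (quasiPoly_succ hP) (quasiPoly_succ hP')

theorem coeff_consecPoly (P : Set (Σ m, Equiv.Perm (Fin m))) (n k : ℕ) :
    (consecPoly P n).coeff k =
      Nat.card {π : Equiv.Perm (Fin n) // (∀ σ ∈ P, ConsecAvoids σ.2 π) ∧ des π = k} := by
  simp only [consecPoly, coeff_descentPoly_univ, AvoidsConsec, consecOccursIn_ofFn, ConsecAvoids]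

theorem coeff_quasiPoly (P : Set (Σ m, Equiv.Perm (Fin m))) (n k : ℕ) :
    (quasiPoly P n).coeff k =
      Nat.card {π : Equiv.Perm (Fin n) // (∀ σ ∈ P, QuasiAvoids σ.2 π) ∧ des π = k} := by
  simp only [quasiPoly, coeff_descentPoly_univ, AvoidsQuasi, quasiOccursIn_ofFn, QuasiAvoids]

end PatternSets

theorem funext_iff_forall_coeff_eq {R : Type*} [Semiring R] {f g : ℕ → R[X]} (h₀ : f 0 = g 0) :
    f = g ↔ ∀ n, 1 ≤ n → ∀ k, (f n).coeff k = (g n).coeff k := by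
  simp only [← Polynomial.ext_iff, funext_iff]
  refine ⟨fun h n _ => h n, fun h n => ?_⟩
  rcases Nat.eq_zero_or_pos n with rfl | hn
  · exact h₀
  · exact h n hn

theorem statement2_general {P P' : Set (Σ m, Equiv.Perm (Fin m))}
    (hP : ∀ σ ∈ P, 1 ≤ σ.1) (hP' : ∀ σ ∈ P', 1 ≤ σ.1) :
    (∀ n, 1 ≤ n → ∀ k : ℕ,
        Nat.card {π : Equiv.Perm (Fin n) // (∀ σ ∈ P, ConsecAvoids σ.2 π) ∧ des π = k} =
        Nat.card {π : Equiv.Perm (Fin n) // (∀ σ ∈ P', ConsecAvoids σ.2 π) ∧ des π = k}) ↔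
    (∀ n, 1 ≤ n → ∀ k : ℕ,
        Nat.card {π : Equiv.Perm (Fin n) // (∀ σ ∈ P, QuasiAvoids σ.2 π) ∧ des π = k} =
        Nat.card {π : Equiv.Perm (Fin n) // (∀ σ ∈ P', QuasiAvoids σ.2 π) ∧ des π = k}) := by
  have hc : consecPoly P 0 = consecPoly P' 0 := by rw [consecPoly_zero hP, consecPoly_zero hP']
  have hq : quasiPoly P 0 = quasiPoly P' 0 := by rw [quasiPoly_zero, quasiPoly_zero]
  have h := consecPoly_eq_iff_quasiPoly_eq hP hP'
  rw [funext_iff_forall_coeff_eq hc, funext_iff_forall_coeff_eq hq] at h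
  simpa only [coeff_consecPoly, coeff_quasiPoly, Nat.cast_inj] using h

/-- Let `σ, σ'` be consecutive patterns on `{1,…,k−1}` (`m = k − 1 ≥ 1`). Then `σ` is
des-Wilf-equivalent to `σ'` if and only if the quasi-consecutive pattern `σk` is
des-Wilf-equivalent to `σ'k`. -/
theorem statement2 {m : ℕ} (hm : 1 ≤ m) (σ σ' : Equiv.Perm (Fin m)) :
    (∀ n, 1 ≤ n → ∀ k : ℕ,
        Nat.card {π : Equiv.Perm (Fin n) // ConsecAvoids σ π ∧ des π = k} =
        Nat.card {π : Equiv.Perm (Fin n) // ConsecAvoids σ' π ∧ des π = k}) ↔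
    (∀ n, 1 ≤ n → ∀ k : ℕ,
        Nat.card {π : Equiv.Perm (Fin n) // QuasiAvoids σ π ∧ des π = k} =
        Nat.card {π : Equiv.Perm (Fin n) // QuasiAvoids σ' π ∧ des π = k}) := by
  simpa using statement2_general (P := {⟨m, σ⟩}) (P' := {⟨m, σ'⟩}) (by simpa) (by simpa)
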